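/- Let K be a compact metric space, φ an isometry of K onto itself such that the set of φ-periodic points is of first category (meagre) in K, let 0 < α ≤ 1, w an invertible element of Lip_α(K), and T f = w · (f ∘ φ) on Lip_α(K). Then σ(T, Lip_α(K)) = σ(T, C(K)), the spectrum of the same weighted composition operator acting on C(K). -/

import Mathlib

/-- Sup norm of a function, as a real supremum. -/
noncomputable def supNorm {K : Type*} (f : K → ℂ) : ℝ :=
  sSup (Set.range fun x => ‖f x‖)

/-- The norm of the Hölder algebra `Lip_α(K)`. -/
noncomputable def holderNorm {K : Type*} [MetricSpace K] (a : ℝ) (f : K → ℂ) : ℝ :=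
  supNorm f + sSup {r : ℝ | ∃ x y : K, x ≠ y ∧ r = ‖f x - f y‖ / dist x y ^ a}

/-- The set of α-Hölder functions on `K` (for `α > 0` these are automatically continuous). -/
def HolSet {K : Type*} [MetricSpace K] (a : ℝ) : Set (K → ℂ) :=
  {f | ∃ C : ℝ, ∀ x y : K, ‖f x - f y‖ ≤ C * dist x y ^ a}

/-- `lam` belongs to the resolvent set of the operator `T` acting on the subalgebra `A`
(with norm `N`): `lam • I - T` maps `A` bijectively onto `A` and has a bounded inverse. -/
def InResolvent {K : Type*} (A : Set (K → ℂ)) (N : (K → ℂ) → ℝ)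
    (T : (K → ℂ) → (K → ℂ)) (lam : ℂ) : Prop :=
  (∀ f ∈ A, lam • f - T f ∈ A) ∧
  (∀ f ∈ A, lam • f - T f = 0 → f = 0) ∧
  ∃ C > 0, ∀ g ∈ A, ∃ f ∈ A, lam • f - T f = g ∧ N f ≤ C * N g

/-!
Both resolvent conditions are shown to be equivalent to one and the same dichotomy, in which `α` no
longer appears: `K` splits into two clopen `φ`-invariant parts such that some cocycle
`w_m = w · (w ∘ φ) ⋯ (w ∘ φ^{m-1})` of the rescaled weight `w / λ` is uniformly smaller than `1` in
modulus on one part and uniformly larger than `1` on the other. The space `C(K)` is treated as the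
case `α = 0`, where the Hölder condition is vacuous up to a factor `2` in the norm.

If the dichotomy holds, a Neumann series for `T^m` on the first part and for `T^{-m}` on the second
inverts `1 - T`: since `φ` is an isometry, `‖T^n‖` exceeds `(sup |w|)^n` by a factor linear in `n`
only, so the spectral radius does not see the Hölder seminorm.

Conversely, let `‖f‖ ≤ D ‖(1 - T) f‖`. Around a non-periodic point take a bump `b` so small that
`b, T b, …, T^{2n} b` have disjoint supports, and test on `f = ∑ (n - |n - i|) T^i b`: the value of
`f` at the centre of `T^n b` is `n` times that of `T^n b`, whereas `(1 - T) f` has coefficients at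
most `1`. For `n > 12 D` this forces `2 |w_j z| ≤ |w_n z|` for some `j ≤ 2n`, first at non-periodic
`z` and then, by density, everywhere. Iterating this gap contradicts slow growth of the Birkhoff
sums of `log |w|`; as their averages are equicontinuous and asymptotically invariant, some
`log |w_m|` is bounded away from `0` with `φ`-invariant sign, and that sign defines the splitting.
-/

open Filter Function Set Topology
open scoped BoundedContinuousFunction

noncomputable section

section HolderSpace

variable {K : Type*} [MetricSpace K] {a : ℝ}

theorem dist_rpow_pos (a : ℝ) {x y : K} (hxy : x ≠ y) : 0 < dist x y ^ a :=
  Real.rpow_pos_of_pos (dist_pos.2 hxy) a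

theorem norm_mul_sub_mul_le {R : Type*} [NonUnitalSeminormedRing R] (z z' v v' : R) :
    ‖z * v - z' * v'‖ ≤ ‖z‖ * ‖v - v'‖ + ‖z - z'‖ * ‖v'‖ :=
  calc ‖z * v - z' * v'‖ = ‖z * (v - v') + (z - z') * v'‖ := by
        rw [mul_sub, sub_mul, sub_add_sub_cancel]
    _ ≤ ‖z‖ * ‖v - v'‖ + ‖z - z'‖ * ‖v'‖ :=
        norm_add_le_of_le (norm_mul_le _ _) (norm_mul_le _ _)

theorem continuous_of_mem_holSet (ha : 0 < a) {f : K → ℂ} (hf : f ∈ HolSet a) :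
    Continuous f := by
  obtain ⟨C, hC⟩ := hf
  refine continuous_iff_continuousAt.2 fun x => tendsto_iff_dist_tendsto_zero.2 ?_
  have bound_tendsto : Tendsto (fun y => C * dist y x ^ a) (𝓝 x) (𝓝 (C * dist x x ^ a)) :=
    (((continuous_id.dist continuous_const).rpow_const fun _ => Or.inr ha.le).const_mul C).tendsto x
  rw [dist_self, Real.zero_rpow ha.ne', mul_zero] at bound_tendsto
  exact squeeze_zero (fun _ => dist_nonneg) (fun y => (dist_eq_norm _ _).trans_le (hC y x))
    bound_tendsto

theorem mem_holSet_zero [CompactSpace K] (f : C(K, ℂ)) : ⇑f ∈ HolSet 0 := by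
  refine ⟨2 * ‖f‖, fun x y => ?_⟩
  rw [Real.rpow_zero, mul_one, two_mul]
  exact norm_sub_le_of_le (f.norm_coe_le_norm x) (f.norm_coe_le_norm y)

variable (K a) in
/-- The graph of the difference quotient `f ↦ (f x - f y) / d(x, y) ^ a`, `x ≠ y`, inside
`C(K) × ℓ^∞`. The condition is linear and closed, so this realises `Lip_a(K)` as a Banach space;
for `a = 0` the quotient is bounded anyway and the space is `C(K)`. -/
def holderGraph : Submodule ℂ (C(K, ℂ) × ({p : K × K // p.1 ≠ p.2} →ᵇ ℂ)) where
  carrier := {F | ∀ p, F.1 p.1.1 - F.1 p.1.2 = F.2 p * (dist p.1.1 p.1.2 ^ a : ℝ)}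
  add_mem' {F G} hF hG p := by
    simp only [Prod.fst_add, Prod.snd_add, ContinuousMap.add_apply,
      BoundedContinuousFunction.add_apply]
    linear_combination hF p + hG p
  zero_mem' p := by simp
  smul_mem' c F hF p := by
    simp only [Prod.smul_fst, Prod.smul_snd, ContinuousMap.smul_apply,
      BoundedContinuousFunction.smul_apply, smul_eq_mul]
    linear_combination c * hF p

theorem isClosed_holderGraph :
    IsClosed (holderGraph K a : Set (C(K, ℂ) × ({p : K × K // p.1 ≠ p.2} →ᵇ ℂ))) := by
  have graph_eq : (holderGraph K a : Set (C(K, ℂ) × ({p : K × K // p.1 ≠ p.2} →ᵇ ℂ))) =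
      ⋂ p, {F | F.1 p.1.1 - F.1 p.1.2 = F.2 p * ((dist p.1.1 p.1.2 ^ a : ℝ) : ℂ)} := by
    ext F
    simp only [mem_iInter]
    rfl
  rw [graph_eq]
  exact isClosed_iInter fun p => isClosed_eq
    (((continuous_eval_const _).comp continuous_fst).sub
      ((continuous_eval_const _).comp continuous_fst))
    (((continuous_eval_const p).comp continuous_snd).mul continuous_const)

variable (K a) in
/-- The Banach space `Lip_a(K)`, with norm the maximum of the sup norm and the Hölder seminorm. -/
def HolderSpace : Type _ := holderGraph K a

namespace HolderSpace

instance : FunLike (HolderSpace K a) K ℂ where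
  coe f := f.1.1
  coe_injective f g hfg := by
    have fst_eq : f.1.1 = g.1.1 := DFunLike.coe_injective hfg
    refine Subtype.ext (Prod.ext fst_eq (BoundedContinuousFunction.ext fun p => ?_))
    have rpow_ne : ((dist p.1.1 p.1.2 ^ a : ℝ) : ℂ) ≠ 0 :=
      Complex.ofReal_ne_zero.2 (dist_rpow_pos a p.2).ne'
    exact mul_right_cancel₀ rpow_ne (by rw [← f.2 p, ← g.2 p, fst_eq])

instance : ContinuousMapClass (HolderSpace K a) K ℂ where
  map_continuous f := f.1.1.continuous

/-- A continuous function with finite Hölder seminorm, as an element of `Lip_a(K)`. -/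
def mk (f : C(K, ℂ)) (hf : ⇑f ∈ HolSet a) : HolderSpace K a where
  val := (f, .ofNormedAddCommGroup
    (fun p => (f p.1.1 - f p.1.2) / (dist p.1.1 p.1.2 ^ a : ℝ))
    (Continuous.div (by fun_prop)
      (Complex.continuous_ofReal.comp
        (Continuous.rpow_const (by fun_prop) fun p => Or.inl (dist_ne_zero.2 p.2)))
      fun p => Complex.ofReal_ne_zero.2 (dist_rpow_pos a p.2).ne')
    hf.choose
    fun p => by
      rw [norm_div, Complex.norm_real, Real.norm_of_nonneg (dist_rpow_pos a p.2).le,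
        div_le_iff₀ (dist_rpow_pos a p.2)]
      exact hf.choose_spec _ _)
  property p := (div_mul_cancel₀ _ (Complex.ofReal_ne_zero.2 (dist_rpow_pos a p.2).ne')).symm

instance : One (HolderSpace K a) where
  one := mk 1 ⟨0, fun x y => by simp⟩

protected theorem one_apply (x : K) : (1 : HolderSpace K a) x = 1 := rfl

variable [CompactSpace K]

instance : NormedAddCommGroup (HolderSpace K a) :=
  inferInstanceAs (NormedAddCommGroup (holderGraph K a))

instance : NormedSpace ℂ (HolderSpace K a) :=
  inferInstanceAs (NormedSpace ℂ (holderGraph K a))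

instance : CompleteSpace (HolderSpace K a) :=
  isClosed_holderGraph.completeSpace_coe

protected theorem sub_apply (f g : HolderSpace K a) (x : K) : (f - g) x = f x - g x := rfl

protected theorem smul_apply (c : ℂ) (f : HolderSpace K a) (x : K) : (c • f) x = c * f x := rfl

variable (K a) in
/-- The inclusion of `Lip_a(K)` into the space of all functions, as a linear map. -/
def coeLinearMap : HolderSpace K a →ₗ[ℂ] K → ℂ where
  toFun f := f
  map_add' _ _ := rfl
  map_smul' _ _ := rfl

protected theorem sum_apply {ι : Type*} (s : Finset ι) (f : ι → HolderSpace K a) (x : K) :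
    (∑ i ∈ s, f i) x = ∑ i ∈ s, f i x :=
  (congrFun (map_sum (coeLinearMap K a) f s) x).trans (Finset.sum_apply x s _)

theorem norm_le_iff {f : HolderSpace K a} {M : ℝ} (hM : 0 ≤ M) :
    ‖f‖ ≤ M ↔ (∀ x, ‖f x‖ ≤ M) ∧ ∀ x y, ‖f x - f y‖ ≤ M * dist x y ^ a := by
  have norm_sub_eq (p : {p : K × K // p.1 ≠ p.2}) :
      ‖f p.1.1 - f p.1.2‖ = ‖f.1.2 p‖ * dist p.1.1 p.1.2 ^ a := by
    rw [show f p.1.1 - f p.1.2 = _ from f.2 p, norm_mul, Complex.norm_real,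
      Real.norm_of_nonneg (dist_rpow_pos a p.2).le]
  have quotient_le_iff (p : {p : K × K // p.1 ≠ p.2}) :
      ‖f.1.2 p‖ ≤ M ↔ ‖f p.1.1 - f p.1.2‖ ≤ M * dist p.1.1 p.1.2 ^ a := by
    rw [norm_sub_eq, mul_le_mul_iff_left₀ (dist_rpow_pos a p.2)]
  rw [show ‖f‖ = max ‖f.1.1‖ ‖f.1.2‖ from rfl, max_le_iff, ContinuousMap.norm_le _ hM,
    BoundedContinuousFunction.norm_le hM]
  refine and_congr Iff.rfl ⟨fun quotient_le x y => ?_, fun sub_le p =>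
    (quotient_le_iff p).2 (sub_le _ _)⟩
  rcases eq_or_ne x y with rfl | hxy
  · simpa using mul_nonneg hM (Real.rpow_nonneg le_rfl a)
  · exact (quotient_le_iff ⟨(x, y), hxy⟩).1 (quotient_le _)

theorem norm_apply_le (f : HolderSpace K a) (x : K) : ‖f x‖ ≤ ‖f‖ :=
  ((norm_le_iff (norm_nonneg f)).1 le_rfl).1 x

theorem norm_sub_apply_le (f : HolderSpace K a) (x y : K) :
    ‖f x - f y‖ ≤ ‖f‖ * dist x y ^ a :=
  ((norm_le_iff (norm_nonneg f)).1 le_rfl).2 x y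

theorem coe_mem_holSet (f : HolderSpace K a) : ⇑f ∈ HolSet a :=
  ⟨‖f‖, f.norm_sub_apply_le⟩

end HolderSpace

end HolderSpace

section WeightedComp

variable {K : Type*} [MetricSpace K] [CompactSpace K] {a : ℝ}

open HolderSpace

theorem norm_mul_comp_sub_le (w f : HolderSpace K a) (φ : K ≃ᵢ K) (x y : K) :
    ‖w x * f (φ x) - w y * f (φ y)‖ ≤
      (‖w x‖ * ‖f‖ + ‖w‖ * ‖f (φ y)‖) * dist x y ^ a :=
  calc ‖w x * f (φ x) - w y * f (φ y)‖
      ≤ ‖w x‖ * ‖f (φ x) - f (φ y)‖ + ‖w x - w y‖ * ‖f (φ y)‖ := norm_mul_sub_mul_le _ _ _ _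
    _ ≤ ‖w x‖ * (‖f‖ * dist x y ^ a) + ‖w‖ * dist x y ^ a * ‖f (φ y)‖ := by
        gcongr
        · simpa only [φ.dist_eq] using f.norm_sub_apply_le (φ x) (φ y)
        · exact w.norm_sub_apply_le x y
    _ = _ := by ring

theorem norm_mul_comp_sub_le_norm (w f : HolderSpace K a) (φ : K ≃ᵢ K) (x y : K) :
    ‖w x * f (φ x) - w y * f (φ y)‖ ≤ 2 * ‖w‖ * ‖f‖ * dist x y ^ a :=
  (norm_mul_comp_sub_le w f φ x y).trans <| by
    rw [show 2 * ‖w‖ * ‖f‖ = ‖w‖ * ‖f‖ + ‖w‖ * ‖f‖ by ring]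
    gcongr
    exacts [w.norm_apply_le x, f.norm_apply_le _]

/-- The weighted composition operator `f ↦ w · (f ∘ φ)` on `Lip_a(K)`. -/
def weightedComp (w : HolderSpace K a) (φ : K ≃ᵢ K) : HolderSpace K a →L[ℂ] HolderSpace K a :=
  LinearMap.mkContinuous
    { toFun f := mk ⟨fun x => w x * f (φ x), by fun_prop⟩ ⟨_, norm_mul_comp_sub_le_norm w f φ⟩
      map_add' f g := DFunLike.ext _ _ fun x => mul_add (w x) (f (φ x)) (g (φ x))
      map_smul' c f := DFunLike.ext _ _ fun x => mul_left_comm (w x) c (f (φ x)) }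
    (2 * ‖w‖)
    fun f => (norm_le_iff (by positivity)).2 ⟨fun x =>
      calc ‖w x * f (φ x)‖ ≤ ‖w‖ * ‖f‖ := by
            rw [norm_mul]
            gcongr
            exacts [w.norm_apply_le x, f.norm_apply_le _]
        _ ≤ 2 * ‖w‖ * ‖f‖ := by
            rw [mul_assoc]
            exact le_mul_of_one_le_left (by positivity) one_le_two,
      norm_mul_comp_sub_le_norm w f φ⟩

theorem weightedComp_apply (w : HolderSpace K a) (φ : K ≃ᵢ K) (f : HolderSpace K a) (x : K) :
    weightedComp w φ f x = w x * f (φ x) := rfl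

theorem one_sub_weightedComp_one (w : HolderSpace K a) :
    1 - weightedComp w 1 = weightedComp (1 - w) 1 :=
  ContinuousLinearMap.ext fun f => DFunLike.ext _ _ fun x => (one_sub_mul (w x) (f x)).symm

theorem weightedComp_mul (w v : HolderSpace K a) (φ ψ : K ≃ᵢ K) :
    weightedComp w φ * weightedComp v ψ = weightedComp (weightedComp w φ v) (ψ * φ) :=
  ContinuousLinearMap.ext fun f => DFunLike.ext _ _ fun x =>
    (mul_assoc (w x) (v (φ x)) (f (ψ (φ x)))).symm

theorem smul_weightedComp (c : ℂ) (w : HolderSpace K a) (φ : K ≃ᵢ K) :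
    c • weightedComp w φ = weightedComp (c • w) φ :=
  ContinuousLinearMap.ext fun f => DFunLike.ext _ _ fun x => (mul_assoc c (w x) (f (φ x))).symm

theorem weightedComp_mul_weightedComp_inv {w w' : HolderSpace K a} (hw : ∀ x, w x * w' x = 1)
    (φ : K ≃ᵢ K) : weightedComp w φ * weightedComp (weightedComp 1 φ⁻¹ w') φ⁻¹ = 1 := by
  refine ContinuousLinearMap.ext fun f => DFunLike.ext _ _ fun x => ?_
  simp only [mul_apply_eq_comp, one_apply_eq_self,
    weightedComp_apply, HolderSpace.one_apply, IsometryEquiv.inv_apply_self]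
  linear_combination f x * hw x

theorem weightedComp_inv_mul_weightedComp {w w' : HolderSpace K a} (hw : ∀ x, w x * w' x = 1)
    (φ : K ≃ᵢ K) : weightedComp (weightedComp 1 φ⁻¹ w') φ⁻¹ * weightedComp w φ = 1 := by
  refine ContinuousLinearMap.ext fun f => DFunLike.ext _ _ fun x => ?_
  simp only [mul_apply_eq_comp, one_apply_eq_self,
    weightedComp_apply, HolderSpace.one_apply, IsometryEquiv.apply_inv_self]
  linear_combination f x * hw (φ⁻¹ x)

theorem isUnit_weightedComp {w w' : HolderSpace K a} (hw : ∀ x, w x * w' x = 1) (φ : K ≃ᵢ K) :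
    IsUnit (weightedComp w φ) :=
  isUnit_iff_exists.2 ⟨_, weightedComp_mul_weightedComp_inv hw φ,
    weightedComp_inv_mul_weightedComp hw φ⟩

theorem norm_weightedComp_pow_le {w : HolderSpace K a} {r : ℝ} (hr : 0 < r)
    (hw : ∀ x, ‖w x‖ ≤ r) (φ : K ≃ᵢ K) (n : ℕ) :
    ‖weightedComp w φ ^ n‖ ≤ r ^ n * (1 + n * (‖w‖ / r)) := by
  refine ContinuousLinearMap.opNorm_le_bound _ (by positivity) fun f => ?_
  have sup_le (m : ℕ) : ∀ x, ‖(weightedComp w φ ^ m) f x‖ ≤ r ^ m * ‖f‖ := by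
    induction m with
    | zero => simpa using f.norm_apply_le
    | succ m ih =>
      intro x
      rw [pow_succ', mul_apply_eq_comp, weightedComp_apply, norm_mul, pow_succ',
        mul_assoc]
      gcongr
      exacts [hw x, ih _]
  induction n with
  | zero => simp
  | succ n ih =>
    rw [pow_succ', mul_apply_eq_comp]
    refine (norm_le_iff (by positivity)).2 ⟨fun x => ?_, fun x y => ?_⟩
    · refine ((pow_succ' (weightedComp w φ) n) ▸ sup_le (n + 1) x).trans ?_
      rw [mul_right_comm]
      exact le_mul_of_one_le_right (by positivity) (le_add_of_nonneg_right (by positivity))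
    · refine (norm_mul_comp_sub_le w _ φ x y).trans ?_
      gcongr
      calc ‖w x‖ * ‖(weightedComp w φ ^ n) f‖ + ‖w‖ * ‖(weightedComp w φ ^ n) f (φ y)‖
          ≤ r * (r ^ n * (1 + n * (‖w‖ / r)) * ‖f‖) + ‖w‖ * (r ^ n * ‖f‖) := by
            gcongr
            exacts [hw x, sup_le n _]
        _ = r ^ (n + 1) * (1 + (n + 1 : ℕ) * (‖w‖ / r)) * ‖f‖ := by
            push_cast
            field_simp
            ring

theorem isUnit_one_sub_of_isUnit_one_sub_pow {R : Type*} [Ring R] {T : R} {n : ℕ}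
    (h : IsUnit (1 - T ^ n)) : IsUnit (1 - T) := by
  have comm : Commute (1 - T) (∑ i ∈ Finset.range n, T ^ i) :=
    Commute.sum_right _ _ _ fun i _ => ((Commute.one_left T).sub_left rfl).pow_right i
  rw [← mul_neg_geom_sum, comm.isUnit_mul_iff] at h
  exact h.1

theorem isUnit_one_sub_weightedComp_of_norm_le {w : HolderSpace K a} {r : ℝ} (hr : r < 1)
    (hw : ∀ x, ‖w x‖ ≤ r) (φ : K ≃ᵢ K) : IsUnit (1 - weightedComp w φ) := by
  obtain ⟨s, hs, hs1⟩ := exists_between (max_lt hr zero_lt_one)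
  have s_pos : 0 < s := (le_max_right _ _).trans_lt hs
  have bound_tendsto : Tendsto (fun n : ℕ => s ^ n * (1 + n * (‖w‖ / s))) atTop (𝓝 0) := by
    have := (tendsto_pow_atTop_nhds_zero_of_lt_one s_pos.le hs1).add
      ((tendsto_self_mul_const_pow_of_lt_one s_pos.le hs1).mul_const (‖w‖ / s))
    rw [zero_mul, add_zero] at this
    exact this.congr fun n => by ring
  obtain ⟨n, hn⟩ := (bound_tendsto.eventually_lt_const zero_lt_one).exists
  exact isUnit_one_sub_of_isUnit_one_sub_pow <| isUnit_one_sub_of_norm_lt_one <|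
    (norm_weightedComp_pow_le s_pos
      (fun x => (hw x).trans ((le_max_left _ _).trans hs.le)) φ n).trans_lt hn

end WeightedComp

section Dichotomy

theorem isUnit_one_sub_of_commute_idempotent {R : Type*} [Ring R] {p S S' : R}
    (hp : p * p = p) (hpS : p * S = S * p) (hSS' : S * S' = 1) (hS'S : S' * S = 1)
    (hpos : IsUnit (1 - p * S)) (hneg : IsUnit (1 - S' * (1 - p))) : IsUnit (1 - S) := by
  have split : 1 - S = (1 - p * S) * (1 - (1 - p) * S) := by
    linear_combination (norm := noncomm_ring) hp * S * S - p * hpS * S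
  have hpS' : p * S' = S' * p := by
    linear_combination (norm := noncomm_ring) S' * p * hSS' - hS'S * p * S' - S' * hpS * S'
  have neg_eq : 1 - (1 - p) * S = (p - (1 - p) * S) * (1 - S' * (1 - p)) := by
    linear_combination (norm := noncomm_ring)
      -((1 - p) * hSS' * (1 - p)) - hp - hp * S' + p * hpS'
  have swap_isUnit : IsUnit (p - (1 - p) * S) := by
    refine isUnit_iff_exists.2 ⟨p - S' * (1 - p), ?_, ?_⟩
    · linear_combination (norm := noncomm_ring)
        (1 - p) * hSS' * (1 - p) + 2 * hp + hp * S' - p * hpS' - p * hpS + hp * S + hpS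
    · linear_combination (norm := noncomm_ring)
        hp + hp * S + S' * hp + S' * hp * S + hS'S - S' * hpS - hS'S * p
  rw [split, neg_eq]
  exact hpos.mul (swap_isUnit.mul hneg)

/-- The cocycle `w_n = w · (w ∘ f) ⋯ (w ∘ f^{n-1})` of the weight `w` over the dynamics `f`. -/
def birkhoffProd {X M : Type*} [CommMonoid M] (f : X → X) (w : X → M) (n : ℕ) (x : X) : M :=
  ∏ i ∈ Finset.range n, w (f^[i] x)

theorem birkhoffProd_succ' {X M : Type*} [CommMonoid M] (f : X → X) (w : X → M) (n : ℕ) (x : X) :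
    birkhoffProd f w (n + 1) x = w x * birkhoffProd f w n (f x) := by
  rw [birkhoffProd, Finset.prod_range_succ', mul_comm]
  rfl

/-- A clopen invariant set splits the space into a part where some cocycle `w_m` is uniformly
smaller than `1` in modulus and a part where it is uniformly larger. -/
def HasDichotomy {X : Type*} [TopologicalSpace X] (f : X → X) (w : X → ℂ) : Prop :=
  ∃ E : Set X, IsClopen E ∧ f ⁻¹' E = E ∧ ∃ (m : ℕ) (r : ℝ), r < 1 ∧
    (∀ x ∈ E, ‖birkhoffProd f w m x‖ ≤ r) ∧ ∀ x ∉ E, 1 ≤ r * ‖birkhoffProd f w m x‖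

theorem coe_isometryEquiv_pow {X : Type*} [PseudoEMetricSpace X] (φ : X ≃ᵢ X) (n : ℕ) :
    ⇑(φ ^ n) = φ^[n] :=
  hom_coe_pow (fun ψ : X ≃ᵢ X => ⇑ψ) rfl (fun _ _ => rfl) φ n

variable {K : Type*} [MetricSpace K] [CompactSpace K] {a : ℝ}

open HolderSpace

theorem weightedComp_pow_apply (w : HolderSpace K a) (φ : K ≃ᵢ K) (n : ℕ) (f : HolderSpace K a)
    (x : K) : (weightedComp w φ ^ n) f x = birkhoffProd φ w n x * f (φ^[n] x) := by
  induction n generalizing x with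
  | zero => simp [birkhoffProd]
  | succ n ih =>
    rw [pow_succ', mul_apply_eq_comp, weightedComp_apply, ih, birkhoffProd_succ', mul_assoc,
      iterate_succ_apply]

theorem weightedComp_pow_one_apply (w : HolderSpace K a) (φ : K ≃ᵢ K) (n : ℕ) (x : K) :
    (weightedComp w φ ^ n) 1 x = birkhoffProd φ w n x := by
  rw [weightedComp_pow_apply, HolderSpace.one_apply, mul_one]

theorem weightedComp_pow (w : HolderSpace K a) (φ : K ≃ᵢ K) (n : ℕ) :
    weightedComp w φ ^ n = weightedComp ((weightedComp w φ ^ n) 1) (φ ^ n) :=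
  ContinuousLinearMap.ext fun f => DFunLike.ext _ _ fun x => by
    rw [weightedComp_apply, weightedComp_pow_one_apply, weightedComp_pow_apply,
      coe_isometryEquiv_pow]

theorem HolderSpace.exists_eq_indicator_of_isClopen (ha : 0 ≤ a) {E : Set K} (hE : IsClopen E) :
    ∃ χ : HolderSpace K a, ∀ x, χ x = E.indicator 1 x := by
  obtain ⟨δ, δ_pos, hδ⟩ := Metric.exists_pos_forall_lt_edist hE.isClosed.isCompact
    hE.compl.isClosed disjoint_compl_right
  have across (x y : K) (hx : x ∈ E) (hy : y ∉ E) : 1 ≤ ((δ : ℝ) ^ a)⁻¹ * dist x y ^ a := by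
    have δ_le : (δ : ℝ) ≤ dist x y := by
      have := (hδ x hx y hy).le
      rwa [edist_nndist, ENNReal.coe_le_coe] at this
    rw [← div_eq_inv_mul, one_le_div (Real.rpow_pos_of_pos (NNReal.coe_pos.2 δ_pos) a)]
    exact Real.rpow_le_rpow δ.2 δ_le ha
  refine ⟨mk ⟨E.indicator 1, continuous_one.indicator (by simp [hE.frontier_eq])⟩
    ⟨((δ : ℝ) ^ a)⁻¹, fun x y => ?_⟩, fun x => rfl⟩
  have rhs_nonneg : 0 ≤ ((δ : ℝ) ^ a)⁻¹ * dist x y ^ a := by positivity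
  by_cases hx : x ∈ E <;> by_cases hy : y ∈ E
  · simpa [hx, hy] using rhs_nonneg
  · simpa [hx, hy] using across x y hx hy
  · simpa [hx, hy, dist_comm] using across y x hy hx
  · simpa [hx, hy] using rhs_nonneg

theorem isUnit_one_sub_weightedComp_of_idempotent {w w' χ : HolderSpace K a}
    (hw : ∀ x, w x * w' x = 1) (φ : K ≃ᵢ K) (χ_idem : ∀ x, χ x * χ x = χ x)
    (χ_comp : ∀ x, χ (φ x) = χ x) {r : ℝ} (hr : r < 1) (small : ∀ x, ‖χ x * w x‖ ≤ r)
    (large : ∀ x, ‖w' x * (1 - χ x)‖ ≤ r) : IsUnit (1 - weightedComp w φ) := by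
  refine isUnit_one_sub_of_commute_idempotent (p := weightedComp χ 1) ?_ ?_
    (weightedComp_mul_weightedComp_inv hw φ) (weightedComp_inv_mul_weightedComp hw φ) ?_ ?_
  · refine ContinuousLinearMap.ext fun f => DFunLike.ext _ _ fun x => ?_
    change χ x * (χ x * f x) = χ x * f x
    rw [← mul_assoc, χ_idem]
  · refine ContinuousLinearMap.ext fun f => DFunLike.ext _ _ fun x => ?_
    change χ x * (w x * f (φ x)) = w x * (χ (φ x) * f (φ x))
    rw [χ_comp, mul_left_comm]
  · rw [weightedComp_mul]
    exact isUnit_one_sub_weightedComp_of_norm_le hr small _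
  · rw [one_sub_weightedComp_one, weightedComp_mul]
    refine isUnit_one_sub_weightedComp_of_norm_le hr (fun x => ?_) _
    simpa only [weightedComp_apply, HolderSpace.one_apply, one_mul, HolderSpace.sub_apply]
      using large (φ⁻¹ x)

theorem isUnit_one_sub_weightedComp_of_clopen (ha : 0 ≤ a) {w w' : HolderSpace K a}
    (hw : ∀ x, w x * w' x = 1) (φ : K ≃ᵢ K) {E : Set K} (hE : IsClopen E) (hφE : φ ⁻¹' E = E)
    {r : ℝ} (hr : r < 1) (small : ∀ x ∈ E, ‖w x‖ ≤ r) (large : ∀ x ∉ E, 1 ≤ r * ‖w x‖) :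
    IsUnit (1 - weightedComp w φ) := by
  obtain ⟨χ, hχ⟩ := exists_eq_indicator_of_isClopen ha hE
  have mem_iff (x : K) : φ x ∈ E ↔ x ∈ E := Set.ext_iff.1 hφE x
  have inv_le {x : K} (hx : x ∉ E) : ‖w' x‖ ≤ r :=
    calc ‖w' x‖ ≤ ‖w' x‖ * (r * ‖w x‖) := le_mul_of_one_le_right (norm_nonneg _) (large x hx)
      _ = r * ‖w x * w' x‖ := by rw [norm_mul]; ring
      _ = r := by rw [hw, norm_one, mul_one]
  have r_nonneg (x : K) : 0 ≤ r := by
    by_cases hx : x ∈ E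
    exacts [(norm_nonneg _).trans (small x hx), (norm_nonneg _).trans (inv_le hx)]
  refine isUnit_one_sub_weightedComp_of_idempotent (χ := χ) hw φ ?_ ?_ hr ?_ ?_ <;>
  · intro x
    by_cases hx : x ∈ E <;> simp [hχ, hx, mem_iff, small, inv_le, r_nonneg x]

theorem HasDichotomy.isUnit_one_sub_weightedComp (ha : 0 ≤ a) {w w' : HolderSpace K a}
    (hw : ∀ x, w x * w' x = 1) {φ : K ≃ᵢ K} (h : HasDichotomy φ w) :
    IsUnit (1 - weightedComp w φ) := by
  obtain ⟨E, hE, hφE, m, r, hr, small, large⟩ := h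
  have preimage_pow : ⇑(φ ^ m) ⁻¹' E = E := by
    rw [coe_isometryEquiv_pow, preimage_iterate_eq]
    exact iterate_fixed hφE m
  have inv_pow (x : K) : (weightedComp w φ ^ m) 1 x * (weightedComp w' φ ^ m) 1 x = 1 := by
    rw [weightedComp_pow_one_apply, weightedComp_pow_one_apply, birkhoffProd, birkhoffProd,
      ← Finset.prod_mul_distrib]
    exact Finset.prod_eq_one fun i _ => hw _
  refine isUnit_one_sub_of_isUnit_one_sub_pow (n := m) ?_
  rw [weightedComp_pow]
  refine isUnit_one_sub_weightedComp_of_clopen ha inv_pow _ hE preimage_pow hr ?_ ?_ <;>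
  simpa only [weightedComp_pow_one_apply]

end Dichotomy

section Tent

variable {K : Type*} [MetricSpace K] {a ε : ℝ} {c : K}

/-- The piecewise linear bump of height `1` centred at `c` and supported in the ball of
radius `ε`. -/
def tent (c : K) (ε : ℝ) (y : K) : ℝ :=
  max (1 - dist y c / ε) 0

theorem tent_nonneg (c : K) (ε : ℝ) (y : K) : 0 ≤ tent c ε y :=
  le_max_right _ _

theorem tent_le_one (hε : 0 < ε) (y : K) : tent c ε y ≤ 1 :=
  max_le (sub_le_self _ (by positivity)) zero_le_one

theorem tent_self (c : K) (ε : ℝ) : tent c ε c = 1 := by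
  simp [tent]

theorem tent_eq_zero (hε : 0 < ε) {y : K} (hy : ε ≤ dist y c) : tent c ε y = 0 :=
  max_eq_right (sub_nonpos.2 ((one_le_div hε).2 hy))

theorem dist_lt_of_tent_ne_zero (hε : 0 < ε) {y : K} (hy : tent c ε y ≠ 0) : dist y c < ε :=
  not_le.1 fun h => hy (tent_eq_zero hε h)

theorem isometry_iterate {X : Type*} [PseudoEMetricSpace X] {f : X → X} (hf : Isometry f) :
    ∀ n, Isometry f^[n]
  | 0 => isometry_id
  | n + 1 => (isometry_iterate hf n).comp hf

theorem tent_isometry_apply {φ : K → K} (hφ : Isometry φ) (c : K) (ε : ℝ) (y : K) :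
    tent (φ c) ε (φ y) = tent c ε y := by
  rw [tent, tent, hφ.dist_eq]

theorem abs_tent_sub_le (hε : 0 < ε) (y y' : K) :
    |tent c ε y - tent c ε y'| ≤ dist y y' / ε :=
  calc |tent c ε y - tent c ε y'|
      ≤ |(1 - dist y c / ε) - (1 - dist y' c / ε)| := abs_max_sub_max_le_abs _ _ _
    _ = |dist y' c - dist y c| / ε := by
        rw [sub_sub_sub_cancel_left, ← sub_div, abs_div, abs_of_pos hε]
    _ ≤ dist y y' / ε := by
        gcongr
        rw [dist_comm y y']
        exact abs_dist_sub_le _ _ _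

theorem abs_tent_sub_le_rpow (ha0 : 0 ≤ a) (ha1 : a ≤ 1) (hε : 0 < ε) (y y' : K) :
    |tent c ε y - tent c ε y'| ≤ (dist y y' / ε) ^ a := by
  rcases le_total (dist y y' / ε) 1 with near | far
  · calc |tent c ε y - tent c ε y'| ≤ (dist y y' / ε) ^ (1 : ℝ) := by
          rw [Real.rpow_one]
          exact abs_tent_sub_le hε y y'
      _ ≤ (dist y y' / ε) ^ a := by
          rcases ha0.eq_or_lt with rfl | ha0
          · simpa using near
          · exact Real.rpow_le_rpow_of_exponent_ge' (by positivity) near ha0.le ha1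
  · calc |tent c ε y - tent c ε y'| ≤ 1 :=
          abs_sub_le_of_nonneg_of_le (tent_nonneg _ _ _) (tent_le_one hε y) (tent_nonneg _ _ _)
            (tent_le_one hε y')
      _ ≤ (dist y y' / ε) ^ a := Real.one_le_rpow far ha0

theorem HolderSpace.exists_eq_tent (ha0 : 0 ≤ a) (ha1 : a ≤ 1) (c : K) (hε : 0 < ε) :
    ∃ b : HolderSpace K a, ∀ y, b y = tent c ε y := by
  refine ⟨mk ⟨fun y => (tent c ε y : ℂ), ?_⟩ ⟨(ε ^ a)⁻¹, fun y y' => ?_⟩, fun y => rfl⟩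
  · unfold tent
    fun_prop
  · rw [ContinuousMap.coe_mk, ← Complex.ofReal_sub, Complex.norm_real, Real.norm_eq_abs,
      ← div_eq_inv_mul, ← Real.div_rpow dist_nonneg hε.le]
    exact abs_tent_sub_le_rpow ha0 ha1 hε y y'

variable {Q : ℝ}

theorem eventually_norm_le_of_dist_lt {u : K → ℂ} (hu : Continuous u) (hQ : ‖u c‖ < Q) :
    ∀ᶠ ε in 𝓝[>] (0 : ℝ), ∀ y, dist y c < ε → ‖u y‖ ≤ Q := by
  obtain ⟨δ, δ_pos, hδ⟩ := Metric.eventually_nhds_iff.1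
    ((hu.norm.tendsto c).eventually_le_const hQ)
  filter_upwards [Ioo_mem_nhdsGT δ_pos] with ε hε y hy
  exact hδ (hy.trans hε.2)

theorem norm_mul_tent_le (hε : 0 < ε) {u : K → ℂ} (hQ : 0 ≤ Q)
    (norm_le : ∀ y, dist y c < ε → ‖u y‖ ≤ Q) (y : K) : ‖u y * tent c ε y‖ ≤ Q := by
  rcases lt_or_ge (dist y c) ε with hy | hy
  · rw [norm_mul, Complex.norm_real, Real.norm_of_nonneg (tent_nonneg _ _ _)]
    exact (mul_le_of_le_one_right (norm_nonneg _) (tent_le_one hε y)).trans (norm_le y hy)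
  · rwa [tent_eq_zero hε hy, Complex.ofReal_zero, mul_zero, norm_zero]

theorem norm_mul_tent_sub_le (ha0 : 0 ≤ a) (ha1 : a ≤ 1) (hε : 0 < ε) {u : K → ℂ} (hQ : 0 ≤ Q)
    (norm_le : ∀ y, dist y c < ε → ‖u y‖ ≤ Q)
    (norm_sub_le : ∀ y y', dist y c < ε → dist y' c < ε →
      ‖u y - u y'‖ ≤ 2 * Q * (dist y y' / ε) ^ a) (y y' : K) :
    ‖u y * tent c ε y - u y' * tent c ε y'‖ ≤ 3 * Q * (dist y y' / ε) ^ a := by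
  wlog hy : dist y c < ε generalizing y y' with swap
  · rcases lt_or_ge (dist y' c) ε with hy' | hy'
    · rw [norm_sub_rev, dist_comm]
      exact swap y' y hy'
    · rw [tent_eq_zero hε hy', tent_eq_zero hε (not_lt.1 hy), Complex.ofReal_zero, mul_zero,
        mul_zero, sub_zero, norm_zero]
      positivity
  have tent_osc : ‖(tent c ε y : ℂ) - tent c ε y'‖ ≤ (dist y y' / ε) ^ a := by
    rw [← Complex.ofReal_sub, Complex.norm_real, Real.norm_eq_abs]
    exact abs_tent_sub_le_rpow ha0 ha1 hε y y'
  have weight_osc : ‖u y - u y'‖ * ‖(tent c ε y' : ℂ)‖ ≤ 2 * Q * (dist y y' / ε) ^ a := by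
    rw [Complex.norm_real, Real.norm_of_nonneg (tent_nonneg _ _ _)]
    rcases lt_or_ge (dist y' c) ε with hy' | hy'
    · exact (mul_le_of_le_one_right (norm_nonneg _) (tent_le_one hε y')).trans
        (norm_sub_le y y' hy hy')
    · rw [tent_eq_zero hε hy', mul_zero]
      positivity
  calc ‖u y * tent c ε y - u y' * tent c ε y'‖
      ≤ ‖u y‖ * ‖(tent c ε y : ℂ) - tent c ε y'‖ + ‖u y - u y'‖ * ‖(tent c ε y' : ℂ)‖ :=
        norm_mul_sub_mul_le _ _ _ _
    _ ≤ Q * (dist y y' / ε) ^ a + 2 * Q * (dist y y' / ε) ^ a := by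
        gcongr
        exact norm_le y hy
    _ = 3 * Q * (dist y y' / ε) ^ a := by ring

variable [CompactSpace K]

/- For `a > 0` the Hölder bound of `u` wins once `‖u‖ ε ^ a ≤ 2 Q`; for `a = 0` the pointwise bound
does. -/
theorem eventually_norm_sub_le_of_dist_lt (ha : 0 ≤ a) {u : HolderSpace K a} (hQ : ‖u c‖ < Q) :
    ∀ᶠ ε in 𝓝[>] (0 : ℝ), ∀ y y', dist y c < ε → dist y' c < ε →
      ‖u y - u y'‖ ≤ 2 * Q * (dist y y' / ε) ^ a := by
  have Q_pos : 0 < Q := (norm_nonneg _).trans_lt hQ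
  rcases ha.eq_or_lt with rfl | ha
  · filter_upwards [eventually_norm_le_of_dist_lt (map_continuous u) hQ] with ε norm_le y y' hy hy'
    rw [Real.rpow_zero, mul_one, two_mul]
    exact norm_sub_le_of_le (norm_le y hy) (norm_le y' hy')
  · have rpow_tendsto : Tendsto (fun ε : ℝ => ‖u‖ * ε ^ a) (𝓝[>] 0) (𝓝 (‖u‖ * 0 ^ a)) :=
      ((Real.continuous_rpow_const ha.le).const_mul ‖u‖).continuousWithinAt
    rw [Real.zero_rpow ha.ne', mul_zero] at rpow_tendsto
    filter_upwards [self_mem_nhdsWithin, rpow_tendsto.eventually_le_const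
      (show 0 < 2 * Q by positivity)] with ε hε norm_le y y' _ _
    rw [Real.div_rpow dist_nonneg (le_of_lt hε), mul_div_assoc', le_div_iff₀
      (Real.rpow_pos_of_pos hε a)]
    calc ‖u y - u y'‖ * ε ^ a ≤ ‖u‖ * dist y y' ^ a * ε ^ a := by
          gcongr
          exacts [Real.rpow_nonneg (le_of_lt hε) a, u.norm_sub_apply_le y y']
      _ = ‖u‖ * ε ^ a * dist y y' ^ a := by ring
      _ ≤ 2 * Q * dist y y' ^ a := by gcongr

theorem eventually_norm_mul_tent_le (ha0 : 0 ≤ a) (ha1 : a ≤ 1) {u : HolderSpace K a}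
    (hQ : ‖u c‖ < Q) :
    ∀ᶠ ε in 𝓝[>] (0 : ℝ), ∀ g : HolderSpace K a, (∀ y, g y = u y * tent c ε y) →
      ‖g‖ ≤ 3 * Q / ε ^ a := by
  have Q_pos : 0 < Q := (norm_nonneg _).trans_lt hQ
  filter_upwards [Ioc_mem_nhdsGT zero_lt_one, eventually_norm_le_of_dist_lt (map_continuous u) hQ,
    eventually_norm_sub_le_of_dist_lt ha0 hQ] with ε ⟨ε_pos, ε_le⟩ norm_le norm_sub_le g hg
  have rpow_pos : 0 < ε ^ a := Real.rpow_pos_of_pos ε_pos a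
  refine (HolderSpace.norm_le_iff (by positivity)).2 ⟨fun y => ?_, fun y y' => ?_⟩
  · calc ‖g y‖ ≤ Q := by rw [hg]; exact norm_mul_tent_le ε_pos Q_pos.le norm_le y
      _ ≤ 3 * Q := by linarith
      _ ≤ 3 * Q / ε ^ a :=
          le_div_self (by positivity) rpow_pos (Real.rpow_le_one ε_pos.le ε_le ha0)
  · rw [hg, hg, div_mul_eq_mul_div, ← mul_div_assoc', ← Real.div_rpow dist_nonneg ε_pos.le]
    exact norm_mul_tent_sub_le ha0 ha1 ε_pos Q_pos.le norm_le norm_sub_le y y'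

end Tent

section Tower

theorem norm_sum_le_mul_of_card_filter_ne_zero_le {ι E : Type*} [NormedAddCommGroup E]
    [DecidableEq E] {s : Finset ι} {v : ι → E} {k : ℕ} {M : ℝ} (hM : 0 ≤ M)
    (card_le : (s.filter (v · ≠ 0)).card ≤ k) (norm_le : ∀ i ∈ s, ‖v i‖ ≤ M) :
    ‖∑ i ∈ s, v i‖ ≤ k * M := by
  rw [← Finset.sum_filter_ne_zero]
  calc ‖∑ i ∈ s with v i ≠ 0, v i‖ ≤ ∑ i ∈ s with v i ≠ 0, M :=
        norm_sum_le_of_le _ fun i hi => norm_le i (Finset.mem_of_mem_filter i hi)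
    _ = (s.filter (v · ≠ 0)).card * M := by rw [Finset.sum_const, nsmul_eq_mul]
    _ ≤ k * M := by gcongr

theorem sub_apply_sum_smul_of_apply_eq_succ {R E : Type*} [Ring R] [AddCommGroup E] [Module R E]
    (T : E →ₗ[R] E) {v : ℕ → E} (hv : ∀ i, T (v i) = v (i + 1)) {c : ℕ → R} {N : ℕ}
    (hc0 : c 0 = 0) (hcN : c N = 0) :
    ∑ i ∈ Finset.range N, c i • v i - T (∑ i ∈ Finset.range N, c i • v i) =
      ∑ i ∈ Finset.range N, (c (i + 1) - c i) • v (i + 1) := by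
  have telescope : ∑ i ∈ Finset.range N, (c (i + 1) • v (i + 1) - c i • v i) = 0 := by
    rw [Finset.sum_range_sub fun i => c i • v i, hc0, hcN, zero_smul, zero_smul, sub_zero]
  simp only [map_sum, map_smul, hv, sub_smul, Finset.sum_sub_distrib] at telescope ⊢
  rw [sub_eq_zero.1 telescope]

/-- The hat function `i ↦ n - |n - i|` on `0, …, 2n`. -/
def hat (n i : ℕ) : ℝ := n - |(n : ℝ) - i|

theorem hat_zero (n : ℕ) : hat n 0 = 0 := by simp [hat]

theorem hat_two_mul (n : ℕ) : hat n (2 * n) = 0 := by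
  rw [hat, Nat.cast_mul, Nat.cast_two, show (n : ℝ) - 2 * n = -n by ring, abs_neg, Nat.abs_cast,
    sub_self]

theorem hat_self (n : ℕ) : hat n n = n := by simp [hat]

theorem abs_hat_succ_sub_le (n i : ℕ) : |hat n (i + 1) - hat n i| ≤ 1 := by
  rw [hat, hat, sub_sub_sub_cancel_left]
  refine (abs_abs_sub_abs_le_abs_sub _ _).trans ?_
  simp

variable {K : Type*} [MetricSpace K]

theorem eventually_two_mul_le_dist {ξ : ℕ → K} {N : ℕ} (hξ : InjOn ξ (Iic N)) :
    ∀ᶠ ε in 𝓝[>] (0 : ℝ), ∀ i ≤ N, ∀ j ≤ N, i ≠ j → 2 * ε ≤ dist (ξ i) (ξ j) := by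
  refine (eventually_all_finite (finite_Iic N)).2 fun i hi =>
    (eventually_all_finite (finite_Iic N)).2 fun j hj => eventually_imp_distrib_left.2 fun hij => ?_
  have half_dist_pos : 0 < dist (ξ i) (ξ j) / 2 := half_pos (dist_pos.2 (hξ.ne hi hj hij))
  filter_upwards [Ioo_mem_nhdsGT half_dist_pos] with ε hε
  linarith [hε.2]

variable [CompactSpace K] {a : ℝ}

open HolderSpace

theorem HolderSpace.norm_sum_le_of_disjoint {ι : Type*} {s : Finset ι} {g : ι → HolderSpace K a}
    {M : ℝ} (hM : 0 ≤ M) (norm_le : ∀ i ∈ s, ‖g i‖ ≤ M)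
    (disjoint : ∀ y, ∀ i ∈ s, ∀ j ∈ s, g i y ≠ 0 → g j y ≠ 0 → i = j) :
    ‖∑ i ∈ s, g i‖ ≤ 2 * M := by
  classical
  have card_le (y : K) : (s.filter (g · y ≠ 0)).card ≤ 1 :=
    Finset.card_le_one.2 fun i hi j hj => by
      rw [Finset.mem_filter] at hi hj
      exact disjoint y i hi.1 j hj.1 hi.2 hj.2
  have card_sub_le (y y' : K) : (s.filter (fun i => g i y - g i y' ≠ 0)).card ≤ 2 := by
    refine (Finset.card_le_card ?_).trans ((Finset.card_union_le _ _).trans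
      (add_le_add (card_le y) (card_le y')))
    intro i
    simp only [Finset.mem_filter, Finset.mem_union, ← and_or_left]
    refine And.imp_right fun hi => ?_
    contrapose! hi
    rw [hi.1, hi.2, sub_zero]
  refine (norm_le_iff (by positivity)).2 ⟨fun y => ?_, fun y y' => ?_⟩
  · rw [HolderSpace.sum_apply]
    refine (norm_sum_le_mul_of_card_filter_ne_zero_le hM (card_le y)
      fun i hi => ((g i).norm_apply_le y).trans (norm_le i hi)).trans ?_
    gcongr
    norm_num
  · rw [HolderSpace.sum_apply, HolderSpace.sum_apply, ← Finset.sum_sub_distrib, mul_assoc]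
    refine norm_sum_le_mul_of_card_filter_ne_zero_le (by positivity) (card_sub_le y y')
      fun i hi => ((g i).norm_sub_apply_le y y').trans ?_
    gcongr
    exact norm_le i hi

theorem norm_one_sub_apply_sum_hat_smul_pow_le {T : HolderSpace K a →L[ℂ] HolderSpace K a}
    {b : HolderSpace K a} {n : ℕ} {B : ℝ} (norm_le : ∀ i ≤ 2 * n, ‖(T ^ i) b‖ ≤ B)
    (disjoint : ∀ y, ∀ i ≤ 2 * n, ∀ j ≤ 2 * n, (T ^ i) b y ≠ 0 → (T ^ j) b y ≠ 0 → i = j) :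
    ‖(1 - T) (∑ i ∈ Finset.range (2 * n), (hat n i : ℂ) • (T ^ i) b)‖ ≤ 2 * B := by
  have image_eq : (1 - T) (∑ i ∈ Finset.range (2 * n), (hat n i : ℂ) • (T ^ i) b) =
      ∑ i ∈ Finset.range (2 * n), ((hat n (i + 1) : ℂ) - hat n i) • (T ^ (i + 1)) b :=
    sub_apply_sum_smul_of_apply_eq_succ (T : HolderSpace K a →ₗ[ℂ] HolderSpace K a)
      (v := fun i => (T ^ i) b) (c := fun i => (hat n i : ℂ)) (N := 2 * n)
      (fun i => (congrArg (· b) (pow_succ' T i)).symm) (by simp [hat_zero]) (by simp [hat_two_mul])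
  rw [image_eq]
  refine norm_sum_le_of_disjoint ((norm_nonneg _).trans (norm_le 0 (Nat.zero_le _)))
    (fun i hi => ?_) fun y i hi j hj hyi hyj => ?_
  · rw [norm_smul, ← Complex.ofReal_sub, Complex.norm_real]
    exact (mul_le_of_le_one_left (norm_nonneg _) (abs_hat_succ_sub_le n i)).trans
      (norm_le _ (Finset.mem_range.1 hi))
  · exact Nat.succ_injective (disjoint y _ (Finset.mem_range.1 hi) _ (Finset.mem_range.1 hj)
      (right_ne_zero_of_mul hyi) (right_ne_zero_of_mul hyj))

/- The test function `f = ∑ hat(i) T^i b` has `f y = n (T^n b) y` and `f z = 0`, while `1 - T` maps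
it to a sum of disjointly supported bumps with coefficients at most `1`. -/
theorem mul_norm_pow_apply_le_of_disjoint {T : HolderSpace K a →L[ℂ] HolderSpace K a} {D : ℝ}
    (hD0 : 0 ≤ D) (hD : ∀ f, ‖f‖ ≤ D * ‖(1 - T) f‖) {b : HolderSpace K a} {n : ℕ} {B : ℝ}
    (norm_le : ∀ i ≤ 2 * n, ‖(T ^ i) b‖ ≤ B)
    (disjoint : ∀ y, ∀ i ≤ 2 * n, ∀ j ≤ 2 * n, (T ^ i) b y ≠ 0 → (T ^ j) b y ≠ 0 → i = j)
    (y : K) {z : K} (hz : ∀ i ≤ 2 * n, (T ^ i) b z = 0) :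
    n * ‖(T ^ n) b y‖ ≤ D * (2 * B) * dist y z ^ a := by
  have B_nonneg : 0 ≤ B := (norm_nonneg _).trans (norm_le 0 (Nat.zero_le _))
  rcases eq_or_ne ((T ^ n) b y) 0 with hy | hy
  · rw [hy, norm_zero, mul_zero]
    positivity
  set f : HolderSpace K a := ∑ i ∈ Finset.range (2 * n), (hat n i : ℂ) • (T ^ i) b with f_def
  have f_apply_z : f z = 0 := by
    rw [f_def, HolderSpace.sum_apply]
    exact Finset.sum_eq_zero fun i hi => by
      rw [HolderSpace.smul_apply, hz i (Finset.mem_range.1 hi).le, mul_zero]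
  have f_apply_y : f y = n * (T ^ n) b y := by
    rw [f_def, HolderSpace.sum_apply, Finset.sum_eq_single n, HolderSpace.smul_apply, hat_self,
      Complex.ofReal_natCast]
    · intro i hi hin
      rw [HolderSpace.smul_apply, mul_eq_zero]
      by_contra! hyi
      exact hin (disjoint y i (Finset.mem_range.1 hi).le n (by lia) hyi.2 hy)
    · intro hn
      obtain rfl : n = 0 := by rw [Finset.mem_range] at hn; lia
      rw [HolderSpace.smul_apply, hat_zero, Complex.ofReal_zero, zero_mul]
  calc n * ‖(T ^ n) b y‖ = ‖f y - f z‖ := by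
        rw [f_apply_y, f_apply_z, sub_zero, norm_mul, Complex.norm_natCast]
    _ ≤ ‖f‖ * dist y z ^ a := f.norm_sub_apply_le y z
    _ ≤ D * (2 * B) * dist y z ^ a := by
        gcongr
        refine (hD f).trans ?_
        gcongr
        exact norm_one_sub_apply_sum_hat_smul_pow_le norm_le disjoint

theorem mul_norm_birkhoffProd_le_of_separated (ha0 : 0 ≤ a) (ha1 : a ≤ 1) {φ : K ≃ᵢ K}
    {w : HolderSpace K a} {D : ℝ} (hD0 : 0 ≤ D) (hD : ∀ f, ‖f‖ ≤ D * ‖(1 - weightedComp w φ) f‖)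
    {n : ℕ} {x : K} {ξ : ℕ → K} (hξ : ∀ i ≤ 2 * n, φ^[i] (ξ i) = x) {ε B : ℝ} (hε : 0 < ε)
    (separated : ∀ i ≤ 2 * n, ∀ j ≤ 2 * n, i ≠ j → 2 * ε ≤ dist (ξ i) (ξ j))
    (norm_le : ∀ i ≤ 2 * n, ∀ g : HolderSpace K a,
      (∀ y, g y = birkhoffProd φ w i y * tent (ξ i) ε y) → ‖g‖ ≤ B)
    {z : K} (hz : dist z (ξ n) = ε) :
    n * ‖birkhoffProd φ w n (ξ n)‖ ≤ D * (2 * B) * ε ^ a := by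
  obtain ⟨b, hb⟩ := exists_eq_tent ha0 ha1 x hε
  have pow_apply (i : ℕ) (hi : i ≤ 2 * n) (y : K) :
      (weightedComp w φ ^ i) b y = birkhoffProd φ w i y * tent (ξ i) ε y := by
    rw [weightedComp_pow_apply, hb, ← hξ i hi,
      tent_isometry_apply (isometry_iterate φ.isometry i)]
  have dist_lt (i : ℕ) (hi : i ≤ 2 * n) (y : K) (hy : (weightedComp w φ ^ i) b y ≠ 0) :
      dist y (ξ i) < ε := by
    rw [pow_apply i hi] at hy
    exact dist_lt_of_tent_ne_zero hε (Complex.ofReal_ne_zero.1 (right_ne_zero_of_mul hy))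
  have pow_apply_z (i : ℕ) (hi : i ≤ 2 * n) : (weightedComp w φ ^ i) b z = 0 := by
    by_contra hzi
    rcases eq_or_ne i n with rfl | hin
    · exact (dist_lt i hi z hzi).ne hz
    · linarith [separated i hi n (by lia) hin, dist_triangle_left (ξ i) (ξ n) z, dist_lt i hi z hzi]
  have bound := mul_norm_pow_apply_le_of_disjoint hD0 hD (n := n) (y := ξ n) (z := z)
    (fun i hi => norm_le i hi _ (pow_apply i hi))
    (fun y i hi j hj hyi hyj => by
      by_contra hij
      linarith [separated i hi j hj hij, dist_triangle_left (ξ i) (ξ j) y, dist_lt i hi y hyi,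
        dist_lt j hj y hyj]) pow_apply_z
  rwa [pow_apply n (by lia), tent_self, Complex.ofReal_one, mul_one, dist_comm, hz] at bound

theorem exists_two_mul_norm_birkhoffProd_le (ha0 : 0 ≤ a) (ha1 : a ≤ 1) {φ : K ≃ᵢ K}
    {w : HolderSpace K a} {D : ℝ} (hD0 : 0 ≤ D) (hD : ∀ f, ‖f‖ ≤ D * ‖(1 - weightedComp w φ) f‖)
    {n : ℕ} (hn : 12 * D < n) {x : K} {ξ : ℕ → K} (hξ : ∀ i ≤ 2 * n, φ^[i] (ξ i) = x)
    (ξ_inj : InjOn ξ (Iic (2 * n))) (acc : (𝓝[≠] (ξ n)).NeBot) :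
    ∃ i ≤ 2 * n, 2 * ‖birkhoffProd φ w n (ξ n)‖ ≤ ‖birkhoffProd φ w i (ξ i)‖ := by
  by_contra! lt_two_mul
  set q := ‖birkhoffProd φ w n (ξ n)‖
  have q_pos : 0 < q := by linarith [lt_two_mul n (by lia), norm_nonneg (birkhoffProd φ w n (ξ n))]
  have norm_le : ∀ᶠ ε in 𝓝[>] (0 : ℝ), ∀ i ≤ 2 * n, ∀ g : HolderSpace K a,
      (∀ y, g y = birkhoffProd φ w i y * tent (ξ i) ε y) → ‖g‖ ≤ 3 * (2 * q) / ε ^ a :=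
    (eventually_all_finite (finite_Iic (2 * n))).2 fun i hi => by
      have := eventually_norm_mul_tent_le ha0 ha1 (u := (weightedComp w φ ^ i) 1) (c := ξ i)
        (Q := 2 * q) (by rw [weightedComp_pow_one_apply]; exact lt_two_mul i hi)
      simpa only [weightedComp_pow_one_apply] using this
  have dist_tendsto : Tendsto (dist · (ξ n)) (𝓝[≠] (ξ n)) (𝓝[>] 0) :=
    tendsto_nhdsWithin_iff.2
      ⟨(tendsto_iff_dist_tendsto_zero.1 tendsto_id).mono_left nhdsWithin_le_nhds,
        eventually_mem_nhdsWithin.mono fun _ => dist_pos.2⟩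
  obtain ⟨z, ⟨norm_le, separated⟩, hz⟩ := ((dist_tendsto.eventually
    (norm_le.and (eventually_two_mul_le_dist ξ_inj))).and eventually_mem_nhdsWithin).exists
  have dist_pos : 0 < dist z (ξ n) := dist_pos.2 hz
  have rpow_pos : 0 < dist z (ξ n) ^ a := Real.rpow_pos_of_pos dist_pos a
  have bound := mul_norm_birkhoffProd_le_of_separated ha0 ha1 hD0 hD hξ dist_pos separated
    norm_le rfl
  have bound_eq : D * (2 * (3 * (2 * q) / dist z (ξ n) ^ a)) * dist z (ξ n) ^ a = 12 * D * q := by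
    field_simp [rpow_pos.ne']
    ring
  rw [bound_eq] at bound
  exact hn.not_ge (le_of_mul_le_mul_right bound q_pos)

end Tower

section Gap

theorem birkhoffProd_add {X M : Type*} [CommMonoid M] (f : X → X) (w : X → M) (m n : ℕ) (x : X) :
    birkhoffProd f w (m + n) x = birkhoffProd f w m x * birkhoffProd f w n (f^[m] x) := by
  simp only [birkhoffProd, Finset.prod_range_add, ← iterate_add_apply, add_comm]

theorem birkhoffProd_ne_zero {X M : Type*} [CommMonoidWithZero M] [NoZeroDivisors M] [Nontrivial M]
    {w : X → M} (hw : ∀ x, w x ≠ 0) (f : X → X) (n : ℕ) (x : X) : birkhoffProd f w n x ≠ 0 :=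
  Finset.prod_ne_zero_iff.2 fun _ _ => hw _

theorem continuous_birkhoffProd {X M : Type*} [TopologicalSpace X] [TopologicalSpace M]
    [CommMonoid M] [ContinuousMul M] {f : X → X} (hf : Continuous f) {w : X → M}
    (hw : Continuous w) (n : ℕ) : Continuous (birkhoffProd f w n) :=
  continuous_finsetProd _ fun i _ => hw.comp (hf.iterate i)

theorem iterate_notMem_periodicPts {X : Type*} {f : X → X} (hf : Injective f) {x : X}
    (hx : x ∉ periodicPts f) (n : ℕ) : f^[n] x ∉ periodicPts f := by
  rintro ⟨p, p_pos, hp⟩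
  refine hx ⟨p, p_pos, hf.iterate n ?_⟩
  rw [← iterate_add_apply, add_comm, iterate_add_apply]
  exact hp

theorem injective_iterate_of_notMem_periodicPts {X : Type*} {f : X → X} (hf : Injective f) {x : X}
    (hx : x ∉ periodicPts f) : Injective (f^[·] x) := by
  intro i j hij
  by_contra hne
  wlog hji : j < i generalizing i j with swap
  · exact swap hij.symm (Ne.symm hne) (lt_of_le_of_ne (not_lt.1 hji) hne)
  · exact hx ⟨i - j, Nat.sub_pos_of_lt hji, iterate_cancel hf hij⟩

theorem exists_norm_le_mul_norm_apply_of_isUnit {𝕜 E : Type*}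
    [NontriviallyNormedField 𝕜] [SeminormedAddCommGroup E] [NormedSpace 𝕜 E] {T : E →L[𝕜] E}
    (hT : IsUnit T) : ∃ D ≥ 0, ∀ f, ‖f‖ ≤ D * ‖T f‖ := by
  obtain ⟨S, -, hST⟩ := isUnit_iff_exists.1 hT
  refine ⟨‖S‖, norm_nonneg _, fun f => ?_⟩
  calc ‖f‖ = ‖(S * T) f‖ := by rw [hST, one_apply_eq_self]
    _ ≤ ‖S‖ * ‖T f‖ := S.le_opNorm (T f)

variable {K : Type*} [MetricSpace K] [CompactSpace K] {a : ℝ}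

/- By compactness the orbit of `x` has two terms `f^[i] x`, `f^[j] x` arbitrarily close to each
other; as `f` is an isometry, `f^[j - i] x` is then just as close to `x`. -/
theorem neBot_nhdsNE_of_notMem_periodicPts {f : K → K} (hf : Isometry f) {x : K}
    (hx : x ∉ periodicPts f) : (𝓝[≠] x).NeBot := by
  obtain ⟨y, -, s, hs, orbit_tendsto⟩ := isCompact_univ.tendsto_subseq (x := fun k : ℕ => f^[k] x)
    fun _ => mem_univ _
  refine mem_closure_iff_nhdsWithin_neBot.1 (Metric.mem_closure_iff.2 fun ε hε => ?_)
  obtain ⟨N, hN⟩ := Metric.cauchySeq_iff.1 orbit_tendsto.cauchySeq ε hε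
  have lt_succ : s N < s (N + 1) := hs N.lt_succ_self
  refine ⟨f^[s (N + 1) - s N] x, fun h => hx ⟨_, Nat.sub_pos_of_lt lt_succ, h⟩, ?_⟩
  calc dist x (f^[s (N + 1) - s N] x) = dist (f^[s N] x) (f^[s N] (f^[s (N + 1) - s N] x)) :=
        ((isometry_iterate hf (s N)).dist_eq _ _).symm
    _ = dist (f^[s N] x) (f^[s (N + 1)] x) := by
        rw [← iterate_add_apply, Nat.add_sub_cancel' lt_succ.le]
    _ < ε := hN N le_rfl (N + 1) N.le_succ

theorem exists_two_mul_norm_birkhoffProd_le_of_notMem_periodicPts (ha0 : 0 ≤ a) (ha1 : a ≤ 1)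
    {φ : K ≃ᵢ K} {w : HolderSpace K a} (hw : ∀ x, w x ≠ 0) {D : ℝ} (hD0 : 0 ≤ D)
    (hD : ∀ f, ‖f‖ ≤ D * ‖(1 - weightedComp w φ) f‖) {n : ℕ} (hn : 12 * D < n) {z : K}
    (hz : z ∉ periodicPts φ) :
    ∃ j ≤ 2 * n, 2 * ‖birkhoffProd φ w j z‖ ≤ ‖birkhoffProd φ w n z‖ := by
  obtain ⟨i, hi, two_mul_le⟩ := exists_two_mul_norm_birkhoffProd_le ha0 ha1 hD0 hD hn
    (x := φ^[2 * n] z) (ξ := fun i => φ^[2 * n - i] z)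
    (fun i hi => by rw [← iterate_add_apply, Nat.add_sub_cancel' hi])
    (fun i hi j hj hij => (tsub_right_inj hi hj).1
      (injective_iterate_of_notMem_periodicPts φ.injective hz hij))
    (neBot_nhdsNE_of_notMem_periodicPts φ.isometry (iterate_notMem_periodicPts φ.injective hz _))
  refine ⟨2 * n - i, Nat.sub_le _ _, ?_⟩
  rw [show 2 * n - n = n by lia] at two_mul_le
  have cocycle : birkhoffProd φ w (2 * n - i) z * birkhoffProd φ w i (φ^[2 * n - i] z) =
      birkhoffProd φ w n z * birkhoffProd φ w n (φ^[n] z) := by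
    rw [← birkhoffProd_add, ← birkhoffProd_add, Nat.sub_add_cancel hi, two_mul]
  refine le_of_mul_le_mul_right ?_ (norm_pos_iff.2 (birkhoffProd_ne_zero hw φ n (φ^[n] z)))
  calc 2 * ‖birkhoffProd φ w (2 * n - i) z‖ * ‖birkhoffProd φ w n (φ^[n] z)‖
      = ‖birkhoffProd φ w (2 * n - i) z‖ * (2 * ‖birkhoffProd φ w n (φ^[n] z)‖) := by ring
    _ ≤ ‖birkhoffProd φ w (2 * n - i) z‖ * ‖birkhoffProd φ w i (φ^[2 * n - i] z)‖ := by gcongr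
    _ = ‖birkhoffProd φ w n z‖ * ‖birkhoffProd φ w n (φ^[n] z)‖ := by
        rw [← norm_mul, cocycle, norm_mul]

theorem exists_forall_exists_two_mul_norm_birkhoffProd_le (ha0 : 0 ≤ a) (ha1 : a ≤ 1)
    {φ : K ≃ᵢ K} (aperiodic : Dense (periodicPts φ)ᶜ) {w : HolderSpace K a} (hw : ∀ x, w x ≠ 0)
    (h : IsUnit (1 - weightedComp w φ)) :
    ∃ n, ∀ z, ∃ j ≤ 2 * n, 2 * ‖birkhoffProd φ w j z‖ ≤ ‖birkhoffProd φ w n z‖ := by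
  obtain ⟨D, hD0, hD⟩ := exists_norm_le_mul_norm_apply_of_isUnit h
  obtain ⟨n, hn⟩ := exists_nat_gt (12 * D)
  have isClosed_gap :
      IsClosed {z | ∃ j ≤ 2 * n, 2 * ‖birkhoffProd φ w j z‖ ≤ ‖birkhoffProd φ w n z‖} := by
    have continuous_norm (j : ℕ) : Continuous fun z => ‖birkhoffProd φ w j z‖ :=
      (continuous_birkhoffProd φ.continuous (map_continuous w) j).norm
    have gap_eq : {z | ∃ j ≤ 2 * n, 2 * ‖birkhoffProd φ w j z‖ ≤ ‖birkhoffProd φ w n z‖} =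
        ⋃ j ∈ Iic (2 * n), {z | 2 * ‖birkhoffProd φ w j z‖ ≤ ‖birkhoffProd φ w n z‖} := by
      ext z
      simp
    rw [gap_eq]
    exact (finite_Iic _).isClosed_biUnion fun j _ =>
      isClosed_le (continuous_const.mul (continuous_norm j)) (continuous_norm n)
  exact ⟨n, fun z => isClosed_gap.closure_subset_iff.2
    (fun z hz => exists_two_mul_norm_birkhoffProd_le_of_notMem_periodicPts ha0 ha1 hw hD0 hD hn hz)
    (aperiodic z)⟩

end Gap

section Birkhoff

theorem eventually_forall_dist_lt_of_uniformEquicontinuous {X Y : Type*} [PseudoMetricSpace X]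
    [PseudoMetricSpace Y] {F : ℕ → X → Y} (hF : UniformEquicontinuous F) {s : Set (X × X)}
    (hs : TotallyBounded s)
    (dist_tendsto : ∀ p ∈ s, Tendsto (fun m => dist (F m p.1) (F m p.2)) atTop (𝓝 0)) {δ : ℝ}
    (hδ : 0 < δ) : ∀ᶠ m in atTop, ∀ p ∈ s, dist (F m p.1) (F m p.2) < δ := by
  have third_pos : 0 < δ / 3 := by positivity
  obtain ⟨η, η_pos, hη⟩ := Metric.uniformEquicontinuous_iff.1 hF (δ / 3) third_pos
  obtain ⟨t, hts, t_finite, cover⟩ := Metric.finite_approx_of_totallyBounded hs η η_pos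
  filter_upwards [(eventually_all_finite t_finite).2 fun q hq =>
    (dist_tendsto q (hts hq)).eventually_lt_const third_pos] with m hm p hp
  obtain ⟨q, hq, hpq⟩ := mem_iUnion₂.1 (cover hp)
  rw [Metric.mem_ball, Prod.dist_eq, max_lt_iff] at hpq
  calc dist (F m p.1) (F m p.2)
      ≤ dist (F m p.1) (F m q.1) + dist (F m q.1) (F m q.2) + dist (F m q.2) (F m p.2) :=
        dist_triangle4 _ _ _ _
    _ < δ / 3 + δ / 3 + δ / 3 :=
        add_lt_add (add_lt_add (hη _ _ hpq.1 m) (hm q hq)) (hη _ _ (dist_comm p.2 q.2 ▸ hpq.2) m)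
    _ = δ := by ring

theorem tendsto_dist_birkhoffAverage_iterate {X : Type*} {u : X → ℝ}
    (hu : Bornology.IsBounded (range u)) (f : X → X) (x : X) (k : ℕ) :
    Tendsto (fun m => dist (birkhoffAverage ℝ f u m x) (birkhoffAverage ℝ f u m (f^[k] x))) atTop
      (𝓝 0) := by
  induction k with
  | zero => simp
  | succ k ih =>
    have step := (tendsto_birkhoffAverage_apply_sub_birkhoffAverage' ℝ hu f (f^[k] x)).norm
    rw [norm_zero] at step
    have sum_tendsto := ih.add step
    rw [add_zero] at sum_tendsto
    refine squeeze_zero (fun _ => dist_nonneg) (fun m => ?_) sum_tendsto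
    rw [iterate_succ_apply', ← dist_eq_norm, dist_comm (birkhoffAverage ℝ f u m (f (f^[k] x)))]
    exact dist_triangle _ _ _

theorem eventually_abs_birkhoffSum_iterate_sub_lt {K : Type*} [MetricSpace K] [CompactSpace K]
    {f : K → K} (hf : LipschitzWith 1 f) {u : K → ℝ} (hu : Continuous u) {η : ℝ} (hη : 0 < η) :
    ∀ᶠ m : ℕ in atTop, ∀ x k, |birkhoffSum f u m (f^[k] x) - birkhoffSum f u m x| < η * m := by
  have average_close := eventually_forall_dist_lt_of_uniformEquicontinuous
    (uniformEquicontinuous_birkhoffAverage ℝ hf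
      (CompactSpace.uniformContinuous_of_continuous hu))
    (s := range fun p : K × ℕ => (p.1, f^[p.2] p.1))
    (isCompact_univ.totallyBounded.subset (subset_univ _))
    (by
      rintro _ ⟨⟨x, k⟩, rfl⟩
      exact tendsto_dist_birkhoffAverage_iterate (isCompact_range hu).isBounded f x k) hη
  filter_upwards [average_close, eventually_gt_atTop 0] with m hm m_pos x k
  have := hm (x, f^[k] x) ⟨(x, k), rfl⟩
  rwa [dist_birkhoffAverage_birkhoffAverage, div_lt_iff₀ (Nat.cast_pos.2 m_pos), dist_comm,
    Real.dist_eq] at this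

variable {X : Type*} {f : X → X} {u : X → ℝ}

theorem abs_birkhoffSum_le_mul {B : ℝ} (hB : ∀ x, |u x| ≤ B) (n : ℕ) (x : X) :
    |birkhoffSum f u n x| ≤ n * B :=
  (Finset.abs_sum_le_sum_abs _ _).trans <|
    (Finset.sum_le_card_nsmul _ _ B fun _ _ => hB _).trans_eq (by simp)

theorem abs_birkhoffSum_mul_le {m : ℕ} {x : X} {M : ℝ}
    (h : ∀ k, |birkhoffSum f u m (f^[k] x)| ≤ M) (q : ℕ) : |birkhoffSum f u (m * q) x| ≤ q * M := by
  induction q with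
  | zero => simp
  | succ q ih =>
    rw [Nat.mul_succ, birkhoffSum_add, Nat.cast_succ, add_one_mul]
    exact (abs_add_le _ _).trans (add_le_add ih (h _))

theorem abs_birkhoffSum_le_of_forall_iterate {B : ℝ} (hB : ∀ x, |u x| ≤ B) {m : ℕ} (hm : 0 < m)
    {x : X} {η : ℝ} (hη : 0 ≤ η) (h : ∀ k, |birkhoffSum f u m (f^[k] x)| ≤ η * m) (N : ℕ) :
    |birkhoffSum f u N x| ≤ η * N + m * B := by
  have B_nonneg : 0 ≤ B := (abs_nonneg _).trans (hB x)
  have remainder_le : ((N % m : ℕ) : ℝ) ≤ m := Nat.cast_le.2 (Nat.mod_lt N hm).le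
  have quotient_le : ((m * (N / m) : ℕ) : ℝ) ≤ N := Nat.cast_le.2 (Nat.mul_div_le N m)
  calc |birkhoffSum f u N x|
      = |birkhoffSum f u (m * (N / m)) x + birkhoffSum f u (N % m) (f^[m * (N / m)] x)| := by
        rw [← birkhoffSum_add, Nat.div_add_mod]
    _ ≤ (N / m : ℕ) * (η * m) + (N % m : ℕ) * B :=
        (abs_add_le _ _).trans
          (add_le_add (abs_birkhoffSum_mul_le h _) (abs_birkhoffSum_le_mul hB _ _))
    _ = η * (m * (N / m) : ℕ) + (N % m : ℕ) * B := by
        push_cast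
        ring
    _ ≤ η * N + m * B := by gcongr

variable {n : ℕ} {c : ℝ}

/- Replace, one after another, the last block of `n` steps by a block along which the sum is smaller
by `c`. -/
theorem exists_birkhoffSum_le_sub_of_gap
    (gap : ∀ z, ∃ j ≤ 2 * n, birkhoffSum f u j z ≤ birkhoffSum f u n z - c) (x : X) (N : ℕ) {t : ℕ}
    (ht : t ≤ N) : ∃ i, i ≤ (N + t) * n ∧ (N - t) * n ≤ i ∧
      birkhoffSum f u i x ≤ birkhoffSum f u (N * n) x - t * c := by
  induction t with
  | zero => exact ⟨N * n, by simp⟩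
  | succ t ih =>
    obtain ⟨i, i_le, le_i, sum_le⟩ := ih (by lia)
    obtain ⟨s, rfl⟩ : ∃ s, N = t + 1 + s := Nat.exists_eq_add_of_le ht
    rw [show t + 1 + s - t = s + 1 by lia, add_one_mul] at le_i
    obtain ⟨k, rfl⟩ := Nat.exists_eq_add_of_le' (show n ≤ i by lia)
    obtain ⟨j, j_le, gap_le⟩ := gap (f^[k] x)
    refine ⟨k + j, by lia, ?_, ?_⟩
    · rw [show t + 1 + s - (t + 1) = s by lia]
      lia
    · rw [birkhoffSum_add] at sum_le ⊢
      push_cast at sum_le ⊢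
      linarith

theorem le_mul_of_gap (gap : ∀ z, ∃ j ≤ 2 * n, birkhoffSum f u j z ≤ birkhoffSum f u n z - c)
    {x : X} {η C : ℝ} (hη : 0 ≤ η) (growth : ∀ N : ℕ, |birkhoffSum f u N x| ≤ η * N + C) :
    c ≤ 3 * η * n := by
  have mul_le (N : ℕ) : N * (c - 3 * η * n) ≤ 2 * C := by
    obtain ⟨i, i_le, -, sum_le⟩ := exists_birkhoffSum_le_sub_of_gap gap x N le_rfl
    have i_le : (i : ℝ) ≤ (N + N) * n := mod_cast i_le
    have growth_i := (abs_le.1 (growth i)).1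
    have growth_end := (abs_le.1 (growth (N * n))).2
    push_cast at growth_end
    linarith [mul_le_mul_of_nonneg_left i_le hη]
  by_contra! lt
  obtain ⟨N, hN⟩ := exists_nat_gt (2 * C / (c - 3 * η * n))
  exact (mul_le N).not_gt ((div_lt_iff₀ (sub_pos.2 lt)).1 hN)

theorem exists_le_abs_birkhoffSum_of_gap {K : Type*} [MetricSpace K] [CompactSpace K] {f : K → K}
    (hf : LipschitzWith 1 f) {u : K → ℝ} (hu : Continuous u) (hc : 0 < c)
    (gap : ∀ z, ∃ j ≤ 2 * n, birkhoffSum f u j z ≤ birkhoffSum f u n z - c) :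
    ∃ m : ℕ, ∃ κ > 0, (∀ x, κ ≤ |birkhoffSum f u m x|) ∧
      ∀ x, |birkhoffSum f u m (f x) - birkhoffSum f u m x| < κ := by
  obtain ⟨B, hB⟩ := isCompact_univ.exists_bound_of_continuousOn hu.continuousOn
  set η : ℝ := c / (6 * (n + 1))
  have η_pos : 0 < η := by positivity
  have η_mul_eq : 6 * η * (n + 1) = c := by
    simp only [η]
    field_simp
  obtain ⟨m, close, m_pos⟩ :=
    ((eventually_abs_birkhoffSum_iterate_sub_lt hf hu η_pos).and (eventually_gt_atTop 0)).exists
  refine ⟨m, η * m, mul_pos η_pos (Nat.cast_pos.2 m_pos), fun x => ?_, fun x => close x 1⟩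
  by_contra! small
  have small_iterate (k : ℕ) : |birkhoffSum f u m (f^[k] x)| ≤ 2 * η * m := by
    linarith [abs_sub_abs_le_abs_sub (birkhoffSum f u m (f^[k] x)) (birkhoffSum f u m x), close x k]
  exact (le_mul_of_gap gap (by positivity) (abs_birkhoffSum_le_of_forall_iterate
    (fun x => hB x trivial) m_pos (by positivity) small_iterate)).not_gt (by linarith)

end Birkhoff

section Criterion

theorem birkhoffSum_log_norm {X : Type*} {w : X → ℂ} (hw : ∀ x, w x ≠ 0) (f : X → X) (n : ℕ)
    (x : X) : birkhoffSum f (fun x => Real.log ‖w x‖) n x = Real.log ‖birkhoffProd f w n x‖ := by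
  rw [birkhoffProd, norm_prod, Real.log_prod fun i _ => norm_ne_zero_iff.2 (hw _)]
  rfl

theorem hasDichotomy_of_le_abs_log_norm {X : Type*} [TopologicalSpace X] {f : X → X}
    (hf : Continuous f) {w : X → ℂ} (w_cont : Continuous w) (hw : ∀ x, w x ≠ 0) {m : ℕ} {κ : ℝ}
    (hκ : 0 < κ) (le_abs : ∀ x, κ ≤ |Real.log ‖birkhoffProd f w m x‖|)
    (close : ∀ x, |Real.log ‖birkhoffProd f w m (f x)‖ - Real.log ‖birkhoffProd f w m x‖| < κ) :
    HasDichotomy f w := by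
  have prod_pos (x : X) : 0 < ‖birkhoffProd f w m x‖ :=
    norm_pos_iff.2 (birkhoffProd_ne_zero hw f m x)
  set S : X → ℝ := fun x => Real.log ‖birkhoffProd f w m x‖
  have S_cont : Continuous S :=
    (continuous_birkhoffProd hf w_cont m).norm.log fun x => (prod_pos x).ne'
  have le_or_le (x : X) : κ ≤ S x ∨ S x ≤ -κ := (le_abs'.1 (le_abs x)).symm
  have neg_iff (x : X) : S x < 0 ↔ S x ≤ -κ := by
    have := le_or_le x
    grind
  refine ⟨{x | S x < 0}, ⟨?_, isOpen_lt S_cont continuous_const⟩, ?_, m, Real.exp (-κ),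
    Real.exp_lt_one_iff.2 (neg_lt_zero.2 hκ), fun x hx => ?_, fun x hx => ?_⟩
  · simp only [neg_iff]
    exact isClosed_le S_cont continuous_const
  · ext x
    have sub_lt : |S (f x) - S x| < κ := close x
    have := le_or_le x
    have := le_or_le (f x)
    simp only [mem_preimage, mem_ofPred_eq]
    grind
  · exact (Real.log_le_iff_le_exp (prod_pos x)).1 ((neg_iff x).1 hx)
  · rw [Real.exp_neg, ← div_eq_inv_mul, one_le_div (Real.exp_pos κ)]
    exact (Real.le_log_iff_exp_le (prod_pos x)).1 ((le_or_le x).resolve_right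
      (mt (neg_iff x).2 hx))

variable {K : Type*} [MetricSpace K] [CompactSpace K] {a : ℝ}

theorem hasDichotomy_of_forall_exists_two_mul_norm_le {f : K → K} (hf : LipschitzWith 1 f)
    {w : K → ℂ} (w_cont : Continuous w) (hw : ∀ x, w x ≠ 0) {n : ℕ}
    (gap : ∀ z, ∃ j ≤ 2 * n, 2 * ‖birkhoffProd f w j z‖ ≤ ‖birkhoffProd f w n z‖) :
    HasDichotomy f w := by
  have prod_pos (m : ℕ) (x : K) : 0 < ‖birkhoffProd f w m x‖ :=
    norm_pos_iff.2 (birkhoffProd_ne_zero hw f m x)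
  have log_gap (z : K) : ∃ j ≤ 2 * n, birkhoffSum f (fun x => Real.log ‖w x‖) j z ≤
      birkhoffSum f (fun x => Real.log ‖w x‖) n z - Real.log 2 := by
    obtain ⟨j, hj, two_mul_le⟩ := gap z
    refine ⟨j, hj, ?_⟩
    rw [birkhoffSum_log_norm hw, birkhoffSum_log_norm hw, le_sub_iff_add_le', ← Real.log_mul
      two_ne_zero (prod_pos j z).ne']
    exact Real.log_le_log (mul_pos two_pos (prod_pos j z)) two_mul_le
  obtain ⟨m, κ, κ_pos, le_abs, close⟩ := exists_le_abs_birkhoffSum_of_gap hf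
    (w_cont.norm.log fun x => norm_ne_zero_iff.2 (hw x)) (Real.log_pos one_lt_two) log_gap
  simp only [birkhoffSum_log_norm hw] at le_abs close
  exact hasDichotomy_of_le_abs_log_norm hf.continuous w_cont hw κ_pos le_abs close

theorem isUnit_one_sub_weightedComp_iff (ha0 : 0 ≤ a) (ha1 : a ≤ 1) {φ : K ≃ᵢ K}
    (aperiodic : Dense (periodicPts φ)ᶜ) {w w' : HolderSpace K a} (hw : ∀ x, w x * w' x = 1) :
    IsUnit (1 - weightedComp w φ) ↔ HasDichotomy φ w := by
  refine ⟨fun h => ?_, fun h => h.isUnit_one_sub_weightedComp ha0 hw⟩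
  have w_ne_zero (x : K) : w x ≠ 0 := left_ne_zero_of_mul_eq_one (hw x)
  obtain ⟨n, gap⟩ :=
    exists_forall_exists_two_mul_norm_birkhoffProd_le ha0 ha1 aperiodic w_ne_zero h
  exact hasDichotomy_of_forall_exists_two_mul_norm_le φ.isometry.lipschitz (map_continuous w)
    w_ne_zero gap

theorem isUnit_smul_one_sub_weightedComp_iff (ha0 : 0 ≤ a) (ha1 : a ≤ 1) {φ : K ≃ᵢ K}
    (aperiodic : Dense (periodicPts φ)ᶜ) {w w' : HolderSpace K a} (hw : ∀ x, w x * w' x = 1)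
    (lam : ℂ) : IsUnit (lam • 1 - weightedComp w φ) ↔
      lam = 0 ∨ HasDichotomy φ fun x => lam⁻¹ * w x := by
  rcases eq_or_ne lam 0 with rfl | hlam
  · rw [zero_smul, zero_sub, IsUnit.neg_iff]
    exact iff_of_true (isUnit_weightedComp hw φ) (Or.inl rfl)
  · have scale : lam • 1 - weightedComp w φ =
        Units.mk0 lam hlam • (1 - weightedComp (lam⁻¹ • w) φ) := by
      rw [smul_sub, ← smul_weightedComp, Units.smul_mk0, Units.smul_mk0, smul_inv_smul₀ hlam]
    rw [scale, isUnit_smul_iff]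
    have inverse (x : K) : (lam⁻¹ • w) x * (lam • w') x = 1 := by
      rw [HolderSpace.smul_apply, HolderSpace.smul_apply, mul_mul_mul_comm, hw, mul_one,
        inv_mul_cancel₀ hlam]
    rw [isUnit_one_sub_weightedComp_iff ha0 ha1 aperiodic inverse, or_iff_right hlam]
    rfl

end Criterion

section Resolvent

theorem inResolvent_iff_isUnit {K X : Type*} [NormedAddCommGroup X] [NormedSpace ℂ X]
    [CompleteSpace X] {ι : X →ₗ[ℂ] K → ℂ} (ι_inj : Injective ι) {N : (K → ℂ) → ℝ} {c₁ c₂ : ℝ}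
    (hc₁ : 0 ≤ c₁) (N_le : ∀ f, N (ι f) ≤ c₁ * ‖f‖) (hc₂ : 0 < c₂) (le_N : ∀ f, ‖f‖ ≤ c₂ * N (ι f))
    {T : (K → ℂ) → K → ℂ} {S : X →L[ℂ] X} (hTS : ∀ f, T (ι f) = ι (S f)) (lam : ℂ) :
    InResolvent (range ι) N T lam ↔ IsUnit (lam • 1 - S) := by
  have image_eq (f : X) : lam • ι f - T (ι f) = ι ((lam • 1 - S) f) := by
    rw [hTS, ← map_smul, ← map_sub]
    rfl
  simp only [InResolvent, forall_mem_range, exists_range_iff, image_eq, ι_inj.eq_iff,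
    map_eq_zero_iff ι ι_inj, mem_range_self, implies_true, true_and]
  constructor
  · rintro ⟨injective, C, -, surjective⟩
    exact ContinuousLinearMap.isUnit_iff_bijective.2
      ⟨(injective_iff_map_eq_zero _).2 injective, fun g => (surjective g).imp fun _ => And.left⟩
  · intro h
    obtain ⟨injective, surjective⟩ := ContinuousLinearMap.isUnit_iff_bijective.1 h
    obtain ⟨D, D_nonneg, hD⟩ := exists_norm_le_mul_norm_apply_of_isUnit h
    refine ⟨(injective_iff_map_eq_zero _).1 injective, c₁ * D * c₂ + 1, by positivity, fun g => ?_⟩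
    obtain ⟨f, rfl⟩ := surjective g
    have N_nonneg : 0 ≤ N (ι ((lam • 1 - S) f)) :=
      nonneg_of_mul_nonneg_right ((norm_nonneg _).trans (le_N _)) hc₂
    refine ⟨f, rfl, ?_⟩
    calc N (ι f) ≤ c₁ * ‖f‖ := N_le f
      _ ≤ c₁ * (D * (c₂ * N (ι ((lam • 1 - S) f)))) := by
          gcongr
          exact (hD f).trans (mul_le_mul_of_nonneg_left (le_N _) D_nonneg)
      _ ≤ (c₁ * D * c₂ + 1) * N (ι ((lam • 1 - S) f)) := by linarith

variable {K : Type*} [MetricSpace K] [CompactSpace K] {a : ℝ}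

theorem range_coeLinearMap (ha : 0 < a) : range (HolderSpace.coeLinearMap K a) = HolSet a :=
  (range_subset_iff.2 HolderSpace.coe_mem_holSet).antisymm fun f hf =>
    ⟨.mk ⟨f, continuous_of_mem_holSet ha hf⟩ hf, rfl⟩

theorem range_coeLinearMap_zero :
    range (HolderSpace.coeLinearMap K 0) = {f | Continuous f} :=
  (range_subset_iff.2 fun f => map_continuous f).antisymm fun f hf =>
    ⟨.mk ⟨f, hf⟩ (mem_holSet_zero _), rfl⟩

theorem supNorm_le_norm (f : HolderSpace K a) : supNorm f ≤ ‖f‖ :=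
  Real.sSup_le (forall_mem_range.2 f.norm_apply_le) (norm_nonneg f)

theorem norm_apply_le_supNorm (f : HolderSpace K a) (x : K) : ‖f x‖ ≤ supNorm f :=
  le_csSup ⟨‖f‖, forall_mem_range.2 f.norm_apply_le⟩ (mem_range_self x)

theorem supNorm_nonneg {X : Type*} (f : X → ℂ) : 0 ≤ supNorm f :=
  Real.sSup_nonneg (forall_mem_range.2 fun _ => norm_nonneg _)

theorem norm_le_two_mul_supNorm (f : HolderSpace K 0) : ‖f‖ ≤ 2 * supNorm f := by
  have sup_nonneg := supNorm_nonneg f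
  refine (HolderSpace.norm_le_iff (by positivity)).2 ⟨fun x => ?_, fun x y => ?_⟩
  · linarith [norm_apply_le_supNorm f x]
  · rw [Real.rpow_zero, mul_one, two_mul]
    exact norm_sub_le_of_le (norm_apply_le_supNorm f x) (norm_apply_le_supNorm f y)

theorem div_dist_rpow_le_norm (f : HolderSpace K a) {r : ℝ}
    (hr : ∃ x y : K, x ≠ y ∧ r = ‖f x - f y‖ / dist x y ^ a) : r ≤ ‖f‖ := by
  obtain ⟨x, y, hxy, rfl⟩ := hr
  exact (div_le_iff₀ (dist_rpow_pos a hxy)).2 (f.norm_sub_apply_le x y)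

theorem holderNorm_le_two_mul_norm (f : HolderSpace K a) : holderNorm a f ≤ 2 * ‖f‖ := by
  rw [two_mul]
  exact add_le_add (supNorm_le_norm f)
    (Real.sSup_le (fun _ => div_dist_rpow_le_norm f) (norm_nonneg f))

theorem norm_le_holderNorm (f : HolderSpace K a) : ‖f‖ ≤ holderNorm a f := by
  set quotients : Set ℝ := {r | ∃ x y : K, x ≠ y ∧ r = ‖f x - f y‖ / dist x y ^ a}
  have sup_nonneg : 0 ≤ supNorm f := supNorm_nonneg f
  have seminorm_nonneg : 0 ≤ sSup quotients := by
    refine Real.sSup_nonneg ?_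
    rintro _ ⟨x, y, -, rfl⟩
    positivity
  refine (HolderSpace.norm_le_iff (add_nonneg sup_nonneg seminorm_nonneg)).2
    ⟨fun x => le_add_of_le_of_nonneg (norm_apply_le_supNorm f x) seminorm_nonneg, fun x y => ?_⟩
  rcases eq_or_ne x y with rfl | hxy
  · rw [sub_self, norm_zero]
    positivity
  · rw [← div_le_iff₀ (dist_rpow_pos a hxy)]
    exact le_add_of_nonneg_of_le sup_nonneg
      (le_csSup ⟨‖f‖, fun _ => div_dist_rpow_le_norm f⟩ ⟨x, y, hxy, rfl⟩)

theorem inResolvent_holSet_iff (ha : 0 < a) (w : HolderSpace K a) (φ : K ≃ᵢ K) (lam : ℂ) :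
    InResolvent (HolSet a) (holderNorm a) (fun f t => w t * f (φ t)) lam ↔
      IsUnit (lam • 1 - weightedComp w φ) := by
  rw [← range_coeLinearMap ha]
  exact inResolvent_iff_isUnit DFunLike.coe_injective zero_le_two holderNorm_le_two_mul_norm
    one_pos (fun f => (norm_le_holderNorm f).trans_eq (one_mul _).symm) (fun _ => rfl) lam

theorem inResolvent_continuous_iff (w : HolderSpace K 0) (φ : K ≃ᵢ K) (lam : ℂ) :
    InResolvent {f : K → ℂ | Continuous f} supNorm (fun f t => w t * f (φ t)) lam ↔
      IsUnit (lam • 1 - weightedComp w φ) := by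
  rw [← range_coeLinearMap_zero]
  exact inResolvent_iff_isUnit DFunLike.coe_injective zero_le_one
    (fun f => (supNorm_le_norm f).trans_eq (one_mul _).symm) two_pos norm_le_two_mul_supNorm
    (fun _ => rfl) lam

end Resolvent

end

/-- If `K` is a compact metric space, `φ` an isometry of `K` onto itself whose periodic
points form a meagre set, `0 < α ≤ 1` and `w` is invertible in `Lip_α(K)`, then the
weighted composition operator `T f = w·(f ∘ φ)` has the same spectrum on `Lip_α(K)`
as on `C(K)`. -/
theorem stmt13 {K : Type*} [MetricSpace K] [CompactSpace K]
    (φ : K ≃ₜ K) (hφ : Isometry φ)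
    (hmeagre : IsMeagre {k : K | ∃ p : ℕ, 0 < p ∧ (⇑φ)^[p] k = k})
    (a : ℝ) (ha0 : 0 < a) (ha1 : a ≤ 1)
    (w : K → ℂ) (hw : w ∈ HolSet a) (hwne : ∀ t, w t ≠ 0)
    (hwinv : (fun t => (w t)⁻¹) ∈ HolSet a) :
    {lam : ℂ | ¬ InResolvent (HolSet a) (holderNorm a)
        (fun f => fun t => w t * f (φ t)) lam} =
    {lam : ℂ | ¬ InResolvent {f : K → ℂ | Continuous f} supNorm
        (fun f => fun t => w t * f (φ t)) lam} := by
  let ψ : K ≃ᵢ K := ⟨φ.toEquiv, hφ⟩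
  have aperiodic : Dense (periodicPts ψ)ᶜ := dense_of_mem_residual hmeagre
  have w_cont : Continuous w := continuous_of_mem_holSet ha0 hw
  have winv_cont : Continuous fun t => (w t)⁻¹ := continuous_of_mem_holSet ha0 hwinv
  have inverse (t : K) : w t * (w t)⁻¹ = 1 := mul_inv_cancel₀ (hwne t)
  ext lam
  have holder_iff := (inResolvent_holSet_iff ha0 (.mk ⟨w, w_cont⟩ hw) ψ lam).trans
    (isUnit_smul_one_sub_weightedComp_iff ha0.le ha1 aperiodic
      (w' := .mk ⟨_, winv_cont⟩ hwinv) inverse lam)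
  have continuous_iff := (inResolvent_continuous_iff (.mk ⟨w, w_cont⟩ (mem_holSet_zero _)) ψ
    lam).trans (isUnit_smul_one_sub_weightedComp_iff le_rfl zero_le_one aperiodic
      (w' := .mk ⟨_, winv_cont⟩ (mem_holSet_zero _)) inverse lam)
  exact not_congr (holder_iff.trans continuous_iff.symm)
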